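/- Let X be a Hausdorff space with a countable k-network, I a discretely-complete ideal of compact subsets of X, and Y a topological space with a countable Pytkeev network. Then the function space C_I(X,Y) of continuous maps from X to Y with the I-open topology has a countable Pytkeev network. -/

import Mathlib

open Set Filter Topology TopologicalSpace

/-- A set `A` accumulates at `x` if every neighborhood of `x` contains
infinitely many points of `A`. -/
def AccumulatesAt {X : Type*} [TopologicalSpace X] (A : Set X) (x : X) : Prop :=
  ∀ U ∈ 𝓝 x, (U ∩ A).Infinite

/-- `𝒩` is a network: for each point and open neighborhood there is a member of `𝒩`
containing the point and contained in the neighborhood. -/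
def IsNetwork {X : Type*} [TopologicalSpace X] (𝒩 : Set (Set X)) : Prop :=
  ∀ (x : X) (U : Set X), IsOpen U → x ∈ U → ∃ N ∈ 𝒩, x ∈ N ∧ N ⊆ U

/-- `𝒩` is a Pytkeev network. -/
def IsPytkeevNetwork {X : Type*} [TopologicalSpace X] (𝒩 : Set (Set X)) : Prop :=
  IsNetwork 𝒩 ∧ ∀ (x : X) (U : Set X), IsOpen U → x ∈ U →
    ∀ A : Set X, AccumulatesAt A x → ∃ N ∈ 𝒩, N ⊆ U ∧ (N ∩ A).Infinite

/-- `𝒩` is a k-network. -/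
def IsKNetwork {X : Type*} [TopologicalSpace X] (𝒩 : Set (Set X)) : Prop :=
  ∀ (U K : Set X), IsOpen U → IsCompact K → K ⊆ U →
    ∃ F ⊆ 𝒩, F.Finite ∧ K ⊆ ⋃₀ F ∧ ⋃₀ F ⊆ U

/-- The `I`-open topology on the space of continuous maps, generated by the sets
`[K;U] = {f : f(K) ⊆ U}` for `K ∈ I` and `U` open. -/
def IOpenTopology {X Y : Type*} [TopologicalSpace X] [TopologicalSpace Y]
    (I : Set (Set X)) : TopologicalSpace C(X, Y) :=
  TopologicalSpace.generateFrom
    {S : Set C(X, Y) | ∃ K ∈ I, ∃ U : Set Y, IsOpen U ∧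
      S = {f : C(X, Y) | ∀ x ∈ K, f x ∈ U}}

/-- The intersection of those among the first `n` sets of the sequence `e` that contain `K`. -/
def outerApprox {X : Type*} (e : ℕ → Set X) (K : Set X) (n : ℕ) : Set X :=
  {x | ∀ i < n, K ⊆ e i → x ∈ e i}

/-- The union of those among the first `n` sets of the sequence `p` that are contained in `U`. -/
def innerApprox {Y : Type*} (p : ℕ → Set Y) (U : Set Y) (n : ℕ) : Set Y :=
  {y | ∃ i < n, p i ⊆ U ∧ y ∈ p i}

section Convergence

variable {ι X : Type*} [TopologicalSpace X] {K : Set X} {S : Set ι} {x : ι → X}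

/-- A compact set together with a family of points converging to it is compact. -/
lemma isCompact_union_image_of_converges (hK : IsCompact K)
    (h : ∀ V, IsOpen V → K ⊆ V → {a ∈ S | x a ∉ V}.Finite) : IsCompact (K ∪ x '' S) := by
  classical
  refine isCompact_of_finite_subcover fun {κ} V hV hcover => ?_
  obtain ⟨t, ht⟩ := hK.elim_finite_subcover V hV (subset_union_left.trans hcover)
  have hfin := (h (⋃ i ∈ t, V i) (isOpen_biUnion fun i _ => hV i) ht).image x
  obtain ⟨t', ht'⟩ := hfin.isCompact.elim_finite_subcover V hV
    (((image_mono (sep_subset _ _)).trans subset_union_right).trans hcover)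
  refine ⟨t ∪ t', ?_⟩
  rw [Finset.set_biUnion_union]
  rintro z (hz | ⟨a, ha, rfl⟩)
  · exact Or.inl (ht hz)
  · by_cases hmem : x a ∈ ⋃ i ∈ t, V i
    · exact Or.inl hmem
    · exact Or.inr (ht' ⟨a, ⟨ha, hmem⟩, rfl⟩)

/-- In a Hausdorff space, a family of points converging to a compact set `K` is discrete
outside `K`. -/
lemma discreteTopology_union_image_diff_of_converges [T2Space X] (hK : IsCompact K)
    (h : ∀ V, IsOpen V → K ⊆ V → {a ∈ S | x a ∉ V}.Finite) :
    DiscreteTopology ↥((K ∪ x '' S) \ K) := by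
  rw [discreteTopology_subtype_iff']
  rintro z hz
  obtain ⟨V, O, hV, hO, hKV, hzO, hVO⟩ := SeparatedNhds.of_isCompact_isCompact hK
    (isCompact_singleton (x := z)) (disjoint_singleton_right.2 hz.2)
  have hfin := ((h V hV hKV).image x).subset (sdiff_subset (t := {z}))
  refine ⟨O \ (x '' {a ∈ S | x a ∉ V} \ {z}), hO.sdiff hfin.isClosed, ?_⟩
  ext w
  constructor
  · rintro ⟨⟨hwO, hw⟩, hwK | ⟨a, ha, rfl⟩, hwK'⟩
    · exact absurd hwK hwK'
    · by_contra hne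
      exact hw ⟨⟨a, ⟨ha, fun haV => hVO.le_bot ⟨haV, hwO⟩⟩, rfl⟩, hne⟩
  · rintro rfl
    exact ⟨⟨hzO rfl, fun hw => hw.2 rfl⟩, hz⟩

/-- An ultrafilter converging to a compact set converges to one of its points. -/
lemma exists_tendsto_of_converges (hK : IsCompact K) (𝒰 : Ultrafilter ι)
    (h : ∀ V, IsOpen V → K ⊆ V → ∀ᶠ a in (𝒰 : Filter ι), x a ∈ V) :
    ∃ z ∈ K, Tendsto x 𝒰 (𝓝 z) := by
  by_contra! hcon
  have hV : ∀ z ∈ K, ∃ V, IsOpen V ∧ z ∈ V ∧ ∀ᶠ a in (𝒰 : Filter ι), x a ∉ V := by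
    intro z hz
    have := hcon z hz
    rw [tendsto_nhds] at this
    push Not at this
    obtain ⟨V, hVo, hzV, hV⟩ := this
    exact ⟨V, hVo, hzV, Ultrafilter.compl_mem_iff_notMem.2 hV⟩
  choose! V hVo hzV hVx using hV
  obtain ⟨t, ht⟩ := hK.elim_nhds_subcover' (fun z _ => V z)
    fun z hz => (hVo z hz).mem_nhds (hzV z hz)
  have hin := h (⋃ z ∈ t, V z) (isOpen_biUnion fun z _ => hVo z z.2) ht
  have hout : ∀ᶠ a in (𝒰 : Filter ι), ∀ z ∈ t, x a ∉ V z :=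
    (Filter.eventually_all_finset t).2 fun z _ => hVx z z.2
  obtain ⟨a, ha, ha'⟩ := (hin.and hout).exists
  simp only [mem_iUnion] at ha
  obtain ⟨z, hz, haz⟩ := ha
  exact ha' z hz haz

end Convergence

/-- Every point of an open subset of a compact Hausdorff set `K` has a compact neighborhood
in `K` contained in that open set. -/
lemma exists_isCompact_nhdsWithin_subset {X : Type*} [TopologicalSpace X] [T2Space X]
    {K O : Set X} (hK : IsCompact K) (hO : IsOpen O) {z : X} (hz : z ∈ O) :
    ∃ C, IsCompact C ∧ C ⊆ K ∩ O ∧ ∃ V ∈ 𝓝 z, V ∩ K ⊆ C := by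
  obtain ⟨V, B, hV, hB, hzV, hKB, hVB⟩ := SeparatedNhds.of_isCompact_isCompact
    (isCompact_singleton (x := z)) (hK.diff hO) (disjoint_singleton_left.2 fun h => h.2 hz)
  refine ⟨K \ B, hK.diff hB, fun w hw => ⟨hw.1, ?_⟩, V, hV.mem_nhds (hzV rfl),
    fun w hw => ⟨hw.2, fun hwB => hVB.le_bot ⟨hw.1, hwB⟩⟩⟩
  by_contra hwO
  exact hw.2 (hKB ⟨hw.1, hwO⟩)

section FunctionSpace

variable {ι X Y : Type*} [TopologicalSpace X] [TopologicalSpace Y] [T2Space X]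
  {I : Set (Set X)} {e : ℕ → Set X} {p : ℕ → Set Y} {K : Set X} {U : Set Y}

/-- If `g` converges to `f ∈ [K;U]` along an ultrafilter, then it is impossible that
`g a ∉ [outerApprox e K (n a); innerApprox p U (n a)]` for almost all `a`,
where `n` is finite-to-one. -/
lemma false_of_tendsto_of_notMem_approx
    (hIcomp : ∀ K ∈ I, IsCompact K)
    (hIinter : ∀ A ∈ I, ∀ K : Set X, IsCompact K → A ∩ K ∈ I)
    (hIdc : ∀ A B : Set X, IsCompact A → IsCompact B → (A \ B).Countable →
      DiscreteTopology ↥(A \ B) → B ∈ I → A ∈ I)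
    (he : ∀ V K : Set X, IsOpen V → IsCompact K → K ⊆ V → ∃ i, K ⊆ e i ∧ e i ⊆ V)
    (hp : IsPytkeevNetwork (range p)) (hKI : K ∈ I) (hU : IsOpen U)
    {f : C(X, Y)} (hf : ∀ x ∈ K, f x ∈ U) (𝒰 : Ultrafilter ι) (h𝒰 : (𝒰 : Filter ι) ≤ cofinite)
    {S : Set ι} (hS : S ∈ 𝒰) {g : ι → C(X, Y)}
    (hg : ∀ C ∈ I, ∀ W : Set Y, IsOpen W → (∀ x ∈ C, f x ∈ W) →
      ∀ᶠ a in (𝒰 : Filter ι), ∀ x ∈ C, g a x ∈ W)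
    {n : ι → ℕ} (hn : ∀ m, {a ∈ S | n a ≤ m}.Finite)
    (hbad : ∀ a ∈ S, ∃ x ∈ outerApprox e K (n a), g a x ∉ innerApprox p U (n a)) : False := by
  have hK := hIcomp K hKI
  obtain ⟨a₀, ha₀⟩ := 𝒰.nonempty_of_mem hS
  have : Nonempty X := ⟨(hbad a₀ ha₀).choose⟩
  choose! x hxK hxU using hbad
  have hconv : ∀ V, IsOpen V → K ⊆ V → {a ∈ S | x a ∉ V}.Finite := by
    intro V hV hKV
    obtain ⟨i, hi, hiV⟩ := he V K hV hK hKV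
    refine (hn i).subset fun a ha => ⟨ha.1, ?_⟩
    by_contra! hlt
    exact ha.2 (hiV (hxK a ha.1 i hlt hi))
  have hinf : ∀ T ∈ 𝒰, T.Infinite := fun T hT hfin =>
    Ultrafilter.compl_notMem_iff.2 hT (h𝒰 hfin.compl_mem_cofinite)
  have hScount : S.Countable := by
    refine (countable_iUnion fun m => (hn m).countable).mono fun a ha => ?_
    exact mem_iUnion.2 ⟨n a, ha, le_rfl⟩
  have hK'comp := isCompact_union_image_of_converges hK hconv
  have hK'I : K ∪ x '' S ∈ I := hIdc _ K hK'comp hK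
    ((hScount.image x).mono fun z hz => hz.1.resolve_left hz.2)
    (discreteTopology_union_image_diff_of_converges hK hconv) hKI
  obtain ⟨z, hzK, hz⟩ := exists_tendsto_of_converges (x := x) hK 𝒰 fun V hV hKV => by
    filter_upwards [hS, h𝒰 (hconv V hV hKV).compl_mem_cofinite] with a haS ha
    by_contra hcon
    exact ha ⟨haS, hcon⟩
  have hlim : Tendsto (fun a => g a (x a)) 𝒰 (𝓝 (f z)) := by
    refine tendsto_nhds.2 fun W hW hzW => ?_
    obtain ⟨C, hC, hCsub, V, hV, hVC⟩ :=
      exists_isCompact_nhdsWithin_subset hK'comp (hW.preimage f.continuous) hzW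
    have hCI : C ∈ I := by
      have := hIinter _ hK'I C hC
      rwa [inter_eq_right.2 (hCsub.trans inter_subset_left)] at this
    filter_upwards [hS, hz hV, hg C hCI W hW fun w hw => (hCsub hw).2] with a haS haV ha
    exact ha _ (hVC ⟨haV, Or.inr ⟨a, haS, rfl⟩⟩)
  have hfew : ∀ i, p i ⊆ U → {a ∈ S | g a (x a) ∈ p i}.Finite := by
    refine fun i hi => (hn i).subset fun a ha => ⟨ha.1, ?_⟩
    by_contra! hlt
    exact hxU a ha.1 ⟨i, hlt, hi, ha.2⟩
  have hacc : AccumulatesAt ((fun a => g a (x a)) '' S) (f z) := by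
    intro W hW hfin
    refine hinf _ (inter_mem hS (hlim (inter_mem hW (hU.mem_nhds (hf z hzK))))) ?_
    refine (hfin.inter_of_left U |>.biUnion (t := fun y => {a ∈ S | g a (x a) = y}) ?_).subset ?_
    · rintro y ⟨-, hyU⟩
      obtain ⟨_, ⟨i, rfl⟩, hyi, hiU⟩ := hp.1 y U hU hyU
      exact (hfew i hiU).subset fun a ha => ⟨ha.1, ha.2 ▸ hyi⟩
    · rintro a ⟨haS, haW, haU⟩
      exact mem_biUnion (x := g a (x a)) ⟨⟨haW, a, haS, rfl⟩, haU⟩ ⟨haS, rfl⟩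
  obtain ⟨_, ⟨i, rfl⟩, hiU, hi⟩ := hp.2 _ U hU (hf z hzK) _ hacc
  refine hi (((hfew i hiU).image fun a => g a (x a)).subset ?_)
  rintro _ ⟨hy, a, haS, rfl⟩
  exact ⟨a, ⟨haS, hy⟩, rfl⟩

lemma exists_mem_approx
    (hIcomp : ∀ K ∈ I, IsCompact K)
    (hIinter : ∀ A ∈ I, ∀ K : Set X, IsCompact K → A ∩ K ∈ I)
    (hIdc : ∀ A B : Set X, IsCompact A → IsCompact B → (A \ B).Countable →
      DiscreteTopology ↥(A \ B) → B ∈ I → A ∈ I)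
    (he : ∀ V K : Set X, IsOpen V → IsCompact K → K ⊆ V → ∃ i, K ⊆ e i ∧ e i ⊆ V)
    (hp : IsPytkeevNetwork (range p)) (hKI : K ∈ I) (hU : IsOpen U)
    {f : C(X, Y)} (hf : ∀ x ∈ K, f x ∈ U) :
    ∃ n, ∀ x ∈ outerApprox e K n, f x ∈ innerApprox p U n := by
  by_contra! hcon
  refine false_of_tendsto_of_notMem_approx (g := fun _ => f) (n := id) (S := univ) hIcomp hIinter
    hIdc he hp hKI hU hf (hyperfilter ℕ) hyperfilter_le_cofinite univ_mem
    (fun C _ W _ hC => .of_forall fun _ => hC) (fun m => ?_) fun a _ => hcon a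
  exact (finite_Iic m).subset fun a ha => ha.2

end FunctionSpace

lemma outerApprox_antitone {X : Type*} (e : ℕ → Set X) (K : Set X) :
    Antitone (outerApprox e K) :=
  fun _ _ hmn _ hx i hi => hx i (hi.trans_le hmn)

lemma innerApprox_monotone {Y : Type*} (p : ℕ → Set Y) (U : Set Y) :
    Monotone (innerApprox p U) :=
  fun _ _ hmn _ ⟨i, hi, hy⟩ => ⟨i, hi.trans_le hmn, hy⟩

lemma subset_outerApprox {X : Type*} (e : ℕ → Set X) (K : Set X) (n : ℕ) :
    K ⊆ outerApprox e K n :=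
  fun _ hx _ _ hi => hi hx

lemma innerApprox_subset {Y : Type*} (p : ℕ → Set Y) (U : Set Y) (n : ℕ) :
    innerApprox p U n ⊆ U :=
  fun _ ⟨_, _, hi, hy⟩ => hi hy

/-- The finite intersections of the sets `[M;Q]`, where `M` is a finite intersection of members
of `e` and `Q` is a finite union of members of `p`. -/
def approxFamily {X Y : Type*} [TopologicalSpace X] [TopologicalSpace Y]
    (e : ℕ → Set X) (p : ℕ → Set Y) : Set (Set C(X, Y)) :=
  range fun s : Finset (Finset ℕ × Finset ℕ) =>
    {f : C(X, Y) | ∀ q ∈ s, ∀ x, (∀ i ∈ q.1, x ∈ e i) → ∃ i ∈ q.2, f x ∈ p i}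

lemma setOf_forall_approx_mem_approxFamily {κ X Y : Type*} [TopologicalSpace X]
    [TopologicalSpace Y] (e : ℕ → Set X) (p : ℕ → Set Y) {F : Set κ} (hF : F.Finite)
    (K : κ → Set X) (U : κ → Set Y) (n : ℕ) :
    {f : C(X, Y) | ∀ j ∈ F, ∀ x ∈ outerApprox e (K j) n, f x ∈ innerApprox p (U j) n} ∈
      approxFamily e p := by
  classical
  refine ⟨hF.toFinset.image fun j => ((Finset.range n).filter (K j ⊆ e ·),
    (Finset.range n).filter (p · ⊆ U j)), ?_⟩
  ext f
  simp [outerApprox, innerApprox, and_assoc]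

/-- Every neighborhood of `f` in the `I`-open topology contains a finite intersection of
sets `[K;U]` containing `f`. -/
lemma exists_finite_subbasic_subset {X Y : Type*} [TopologicalSpace X] [TopologicalSpace Y]
    {I : Set (Set X)} {O : Set C(X, Y)} (hO : IsOpen[IOpenTopology I] O) {f : C(X, Y)}
    (hf : f ∈ O) :
    ∃ F : Set (Set X × Set Y), F.Finite ∧ (∀ j ∈ F, j.1 ∈ I ∧ IsOpen j.2) ∧
      (∀ j ∈ F, ∀ x ∈ j.1, f x ∈ j.2) ∧ {g : C(X, Y) | ∀ j ∈ F, ∀ x ∈ j.1, g x ∈ j.2} ⊆ O := by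
  let := IOpenTopology (Y := Y) I
  obtain ⟨_, ⟨G, ⟨hGfin, hG⟩, rfl⟩, hfG, hGO⟩ :=
    (isTopologicalBasis_of_subbasis (t := IOpenTopology I) rfl).exists_subset_of_mem_open hf hO
  have hG' : ∀ s ∈ G, ∃ K ∈ I, ∃ U : Set Y, IsOpen U ∧
      s = {f : C(X, Y) | ∀ x ∈ K, f x ∈ U} := fun s hs => hG hs
  choose! K hK U hU hKU using hG'
  refine ⟨(fun s => (K s, U s)) '' G, hGfin.image _, ?_, ?_, fun g hg => hGO fun s hs => ?_⟩
  · rintro _ ⟨s, hs, rfl⟩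
    exact ⟨hK s hs, hU s hs⟩
  · rintro _ ⟨s, hs, rfl⟩
    have := hfG s hs
    rwa [hKU s hs] at this
  · rw [hKU s hs]
    exact hg _ ⟨s, hs, rfl⟩

lemma setOf_mapsTo_mem_nhds {X Y : Type*} [TopologicalSpace X] [TopologicalSpace Y]
    {I : Set (Set X)} {K : Set X} (hK : K ∈ I) {U : Set Y} (hU : IsOpen U) {f : C(X, Y)}
    (hf : ∀ x ∈ K, f x ∈ U) :
    {g : C(X, Y) | ∀ x ∈ K, g x ∈ U} ∈ @nhds _ (IOpenTopology I) f := by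
  let := IOpenTopology (Y := Y) I
  exact IsOpen.mem_nhds (isOpen_generateFrom_of_mem ⟨K, hK, U, hU, rfl⟩) hf

theorem isPytkeevNetwork_approxFamily {X Y : Type*}
    [TopologicalSpace X] [TopologicalSpace Y] [T2Space X]
    {I : Set (Set X)} {e : ℕ → Set X} {p : ℕ → Set Y}
    (hIcomp : ∀ K ∈ I, IsCompact K)
    (hIinter : ∀ A ∈ I, ∀ K : Set X, IsCompact K → A ∩ K ∈ I)
    (hIdc : ∀ A B : Set X, IsCompact A → IsCompact B → (A \ B).Countable →
      DiscreteTopology ↥(A \ B) → B ∈ I → A ∈ I)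
    (he : ∀ V K : Set X, IsOpen V → IsCompact K → K ⊆ V → ∃ i, K ⊆ e i ∧ e i ⊆ V)
    (hp : IsPytkeevNetwork (range p)) :
    @IsPytkeevNetwork C(X, Y) (IOpenTopology I) (approxFamily e p) := by
  have key : ∀ F : Set (Set X × Set Y), F.Finite → (∀ j ∈ F, j.1 ∈ I ∧ IsOpen j.2) →
      ∀ f : C(X, Y), (∀ j ∈ F, ∀ x ∈ j.1, f x ∈ j.2) →
      ∃ n, ∀ j ∈ F, ∀ x ∈ outerApprox e j.1 n, f x ∈ innerApprox p j.2 n := by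
    intro F hF hFI f hf
    have := fun j hj => exists_mem_approx hIcomp hIinter hIdc he hp (hFI j hj).1 (hFI j hj).2
      (hf j hj)
    choose! n hn using this
    obtain ⟨m, hm⟩ := (hF.image n).bddAbove
    exact ⟨m, fun j hj x hx => innerApprox_monotone p _ (hm ⟨j, hj, rfl⟩)
      (hn j hj x (outerApprox_antitone e _ (hm ⟨j, hj, rfl⟩) hx))⟩
  have hsub : ∀ (F : Set (Set X × Set Y)) (n : ℕ),
      {f : C(X, Y) | ∀ j ∈ F, ∀ x ∈ outerApprox e j.1 n, f x ∈ innerApprox p j.2 n} ⊆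
        {f | ∀ j ∈ F, ∀ x ∈ j.1, f x ∈ j.2} := fun F n f hf j hj x hx =>
    innerApprox_subset p _ n (hf j hj x (subset_outerApprox e _ n hx))
  refine ⟨fun f O hO hfO => ?_, fun f O hO hfO A hA => ?_⟩
  · obtain ⟨F, hF, hFI, hfF, hFO⟩ := exists_finite_subbasic_subset hO hfO
    obtain ⟨n, hn⟩ := key F hF hFI f hfF
    exact ⟨_, setOf_forall_approx_mem_approxFamily e p hF Prod.fst Prod.snd n, hn,
      (hsub F n).trans hFO⟩
  obtain ⟨F, hF, hFI, hfF, hFO⟩ := exists_finite_subbasic_subset hO hfO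
  by_contra! hcon
  set N : ℕ → Set C(X, Y) := fun n =>
    {f | ∀ j ∈ F, ∀ x ∈ outerApprox e j.1 n, f x ∈ innerApprox p j.2 n} with hN
  have hNmono : Monotone N := fun m n hmn g hg j hj x hx =>
    innerApprox_monotone p _ hmn (hg j hj x (outerApprox_antitone e _ hmn hx))
  have hNfin : ∀ n, (N n ∩ A).Finite := fun n => hcon _
    (setOf_forall_approx_mem_approxFamily e p hF Prod.fst Prod.snd n) ((hsub F n).trans hFO)
  have hne : (@nhds _ (IOpenTopology I) f ⊓ 𝓟 A ⊓ cofinite).NeBot := by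
    rw [inf_assoc, inf_neBot_iff]
    intro V hV T hT
    obtain ⟨T₁, hT₁, T₂, hT₂, rfl⟩ := mem_inf_iff.1 hT
    obtain ⟨g, hg, hgT⟩ := ((hA V hV).sdiff (mem_cofinite.1 hT₂)).nonempty
    exact ⟨g, hg.1, hT₁ hg.2, not_not.1 hgT⟩
  set 𝒰 := Ultrafilter.of (@nhds _ (IOpenTopology I) f ⊓ 𝓟 A ⊓ cofinite)
  have hle := Ultrafilter.of_le (@nhds _ (IOpenTopology I) f ⊓ 𝓟 A ⊓ cofinite)
  have hcof : (𝒰 : Filter C(X, Y)) ≤ cofinite := hle.trans inf_le_right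
  have hnhds : (𝒰 : Filter C(X, Y)) ≤ @nhds _ (IOpenTopology I) f :=
    hle.trans (inf_le_left.trans inf_le_left)
  have hA𝒰 : A ∈ 𝒰 := (hle.trans (inf_le_left.trans inf_le_right)) (mem_principal_self A)
  have hlim : ∀ C ∈ I, ∀ W : Set Y, IsOpen W → (∀ x ∈ C, f x ∈ W) →
      ∀ᶠ g in (𝒰 : Filter C(X, Y)), ∀ x ∈ C, g x ∈ W := fun C hC W hW hCW =>
    hnhds (setOf_mapsTo_mem_nhds hC hW hCW)
  have hF𝒰 : ∀ᶠ g in (𝒰 : Filter C(X, Y)), ∀ j ∈ F, ∀ x ∈ j.1, g x ∈ j.2 :=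
    (eventually_all_finite hF).2 fun j hj =>
      hlim j.1 (hFI j hj).1 j.2 (hFI j hj).2 (hfF j hj)
  have hrank : ∀ g ∈ {g | ∀ j ∈ F, ∀ x ∈ j.1, g x ∈ j.2} \ N 0, ∃ n, g ∉ N n ∧ g ∈ N (n + 1) := by
    rintro g ⟨hgF, hg0⟩
    by_contra! hstep
    obtain ⟨n, hn⟩ := key F hF hFI g hgF
    exact Nat.rec (motive := fun n => g ∉ N n) hg0 hstep n hn
  choose! n hnN hnN' using hrank
  have hS : ∀ᶠ g in (𝒰 : Filter C(X, Y)),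
      g ∈ A ∧ g ∈ {g | ∀ j ∈ F, ∀ x ∈ j.1, g x ∈ j.2} \ N 0 := by
    filter_upwards [hA𝒰, hF𝒰, hcof (hNfin 0).compl_mem_cofinite] with g hgA hgF hg0
    exact ⟨hgA, hgF, fun h => hg0 ⟨h, hgA⟩⟩
  have hbad : ∀ᶠ g in (𝒰 : Filter C(X, Y)), ∃ j ∈ F, g ∈ A ∧ g ∈ N (n g + 1) ∧
      ∃ x ∈ outerApprox e j.1 (n g), g x ∉ innerApprox p j.2 (n g) := by
    filter_upwards [hS] with g hg
    have := hnN g hg.2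
    simp only [hN, mem_ofPred_eq] at this
    push Not at this
    obtain ⟨j, hj, x, hx⟩ := this
    exact ⟨j, hj, hg.1, hnN' g hg.2, x, hx⟩
  obtain ⟨j, hj, hjS⟩ : ∃ j ∈ F, {g | g ∈ A ∧ g ∈ N (n g + 1) ∧
      ∃ x ∈ outerApprox e j.1 (n g), g x ∉ innerApprox p j.2 (n g)} ∈ 𝒰 := by
    refine (Ultrafilter.finite_biUnion_mem_iff hF).1 ?_
    filter_upwards [hbad] with g hg
    obtain ⟨j, hj, hg⟩ := hg
    exact mem_biUnion hj hg
  refine false_of_tendsto_of_notMem_approx (g := id) (n := n) hIcomp hIinter hIdc he hp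
    (hFI j hj).1 (hFI j hj).2 (hfF j hj) 𝒰 hcof hjS hlim (fun m => ?_) fun g hg => hg.2.2
  exact (hNfin (m + 1)).subset fun g hg => ⟨hNmono (Nat.succ_le_succ hg.2) hg.1.2.1, hg.1.1⟩

lemma IsPytkeevNetwork.mono {Y : Type*} [TopologicalSpace Y] {P Q : Set (Set Y)}
    (hP : IsPytkeevNetwork P) (hPQ : P ⊆ Q) : IsPytkeevNetwork Q := by
  refine ⟨fun y U hU hy => ?_, fun y U hU hy A hA => ?_⟩
  · obtain ⟨N, hN, h⟩ := hP.1 y U hU hy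
    exact ⟨N, hPQ hN, h⟩
  · obtain ⟨N, hN, h⟩ := hP.2 y U hU hy A hA
    exact ⟨N, hPQ hN, h⟩

/-- For a Hausdorff space `X` with a countable k-network, a discretely-complete ideal `I`
of compact subsets of `X`, and a space `Y` with a countable Pytkeev network, the space
`C_I(X,Y)` with the `I`-open topology has a countable Pytkeev network. -/
theorem functionSpace_countable_pytkeevNetwork {X Y : Type*}
    [TopologicalSpace X] [TopologicalSpace Y] [T2Space X]
    (h𝒦 : ∃ 𝒦 : Set (Set X), 𝒦.Countable ∧ IsKNetwork 𝒦)
    (I : Set (Set X))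
    (hIcomp : ∀ K ∈ I, IsCompact K)
    (hIcover : ⋃₀ I = univ)
    (hIunion : ∀ A ∈ I, ∀ B ∈ I, A ∪ B ∈ I)
    (hIinter : ∀ A ∈ I, ∀ K : Set X, IsCompact K → A ∩ K ∈ I)
    (hIdc : ∀ A B : Set X, IsCompact A → IsCompact B → (A \ B).Countable →
      DiscreteTopology ↥(A \ B) → B ∈ I → A ∈ I)
    (hPnet : ∃ Pnet : Set (Set Y), Pnet.Countable ∧ IsPytkeevNetwork Pnet) :
    ∃ 𝒩 : Set (Set C(X, Y)), 𝒩.Countable ∧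
      @IsPytkeevNetwork C(X, Y) (IOpenTopology I) 𝒩 := by
  obtain ⟨𝒦, h𝒦c, h𝒦⟩ := h𝒦
  obtain ⟨P, hPc, hP⟩ := hPnet
  obtain ⟨p, hp⟩ := countable_iff_exists_subset_range.1 hPc
  obtain ⟨e, he⟩ := countable_iff_exists_subset_range.1
    ((countable_ofPred_finite_subset h𝒦c).image sUnion)
  refine ⟨approxFamily e p, countable_range _,
    isPytkeevNetwork_approxFamily hIcomp hIinter hIdc (fun V K hV hK hKV => ?_) (hP.mono hp)⟩
  obtain ⟨F, hF𝒦, hF, hKF, hFV⟩ := h𝒦 V K hV hK hKV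
  obtain ⟨i, hi⟩ := he ⟨F, ⟨hF, hF𝒦⟩, rfl⟩
  exact ⟨i, hi ▸ hKF, hi ▸ hFV⟩
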